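/- arXiv:1012.0827 — 3 statements merged into one kernel-verified Lean document; each statement's English description precedes it below -/
import Mathlib

section
/- There exists a 6-piece trisection of the square: there are six closed subsets P₁,…,P₆ of the plane ℝ² whose union is the square [0,√3]×[0,√3], whose interiors are pairwise disjoint, together with six isometries g₁,…,g₆ of ℝ², such that the images g₁(P₁),…,g₆(P₆) have pairwise disjoint interiors and their union is the union of the three pairwise disjoint unit squares [0,1]×[0,1], [2,3]×[0,1] and [4,5]×[0,1]. -/
open Real Set

/-- The plane. -/
abbrev Plane := EuclideanSpace ℝ (Fin 2)

/-- The axis-aligned closed rectangle `[a,b] × [c,d]` in the plane. -/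
noncomputable def rect (a b c d : ℝ) : Set Plane :=
  {p | p 0 ∈ Set.Icc a b ∧ p 1 ∈ Set.Icc c d}

/-!
Cut the square `[0, √3]²` along the line `x + √3 y = 3`, which passes through its upper left corner.
Cut the part below the line along `y = 1`, then into four pieces by vertical cuts at `x = 1` and
`x = 2 - √3`; cut the part above the line vertically at `x = √3 - 1`. On the other side, cut
`[2, 3] × [0, 1]` along `x + √3 y = 4` and `[4, 5] × [0, 1]` along `x + √3 y = 5`, and split the
part of `[2, 3] × [0, 1]` below its line at `x = √3 + 1`. The pieces agree up to translations,
which carry the first slanted line to the other two.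
-/

open Topology

section Dissection

variable {X ι : Type*} [TopologicalSpace X] {P : ι → Set X} {s t : Set ι} {S T : Set X}

/-- The pieces `P i`, `i ∈ s`, form a dissection of the region `S`: they are closed, do not overlap
and cover exactly `S`. Working with a subset `s` of a fixed index type lets dissections of parts of
a region be glued by taking unions of index sets. -/
structure IsDissection (P : ι → Set X) (s : Set ι) (S : Set X) : Prop where
  isClosed : ∀ i ∈ s, IsClosed (P i)
  pairwiseDisjoint : s.PairwiseDisjoint fun i => interior (P i)
  biUnion_eq : ⋃ i ∈ s, P i = S

theorem IsDissection.subset (h : IsDissection P s S) {i : ι} (hi : i ∈ s) : P i ⊆ S :=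
  h.biUnion_eq ▸ subset_biUnion_of_mem (u := P) hi

theorem IsDissection.singleton {i : ι} (hP : IsClosed (P i)) : IsDissection P {i} (P i) where
  isClosed := by simpa using hP
  pairwiseDisjoint := pairwiseDisjoint_singleton i _
  biUnion_eq := biUnion_singleton i P

theorem IsDissection.union (hS : IsDissection P s S) (hT : IsDissection P t T)
    (hST : Disjoint (interior S) (interior T)) : IsDissection P (s ∪ t) (S ∪ T) where
  isClosed i := Or.rec (hS.isClosed i) (hT.isClosed i)
  pairwiseDisjoint := hS.pairwiseDisjoint.union hT.pairwiseDisjoint fun _ hi _ hj _ =>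
    hST.mono (interior_mono (hS.subset hi)) (interior_mono (hT.subset hj))
  biUnion_eq := by rw [biUnion_union, hS.biUnion_eq, hT.biUnion_eq]

theorem disjoint_interior_preimage_Iic_Ici {α : Type*} [TopologicalSpace α]
    [PartialOrder α] {f : X → α} (hf : IsOpenMap f) (c : α) [(𝓝[≠] c).NeBot] :
    Disjoint (interior (f ⁻¹' Iic c)) (interior (f ⁻¹' Ici c)) := by
  rw [disjoint_iff_inter_eq_empty, ← interior_inter, ← preimage_inter, inter_comm, Ici_inter_Iic,
    Icc_self, ← subset_empty_iff]
  simpa only [interior_singleton, preimage_empty] using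
    hf.interior_preimage_subset_preimage_interior (s := {c})

theorem IsDissection.cut {α : Type*} [TopologicalSpace α] [LinearOrder α] {f : X → α}
    (hf : IsOpenMap f) (c : α) [(𝓝[≠] c).NeBot] (hle : IsDissection P s (S ∩ f ⁻¹' Iic c))
    (hge : IsDissection P t (S ∩ f ⁻¹' Ici c)) : IsDissection P (s ∪ t) S := by
  have hdisj := (disjoint_interior_preimage_Iic_Ici hf c).mono
    (interior_mono (inter_subset_right (s := S))) (interior_mono (inter_subset_right (s := S)))
  simpa only [← inter_union_distrib_left, ← preimage_union, Iic_union_Ici, preimage_univ,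
    inter_univ] using hle.union hge hdisj

end Dissection

theorem isClosed_rect (a b c d : ℝ) : IsClosed (rect a b c d) :=
  (isClosed_Icc.preimage (by fun_prop : Continuous fun p : Plane => p 0)).inter
    (isClosed_Icc.preimage (by fun_prop : Continuous fun p : Plane => p 1))

theorem disjoint_rect_of_lt {a b a' b' : ℝ} (h : b < a') (c d c' d' : ℝ) :
    Disjoint (rect a b c d) (rect a' b' c' d') :=
  disjoint_left.2 fun _ hp hp' => (hp.1.2.trans_lt h).not_ge hp'.1.1

theorem isOpenMap_coord {ι : Type*} (i : ι) : IsOpenMap fun p : EuclideanSpace ℝ ι => p i :=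
  (isOpenMap_eval i).comp (PiLp.homeomorph 2 fun _ : ι => ℝ).isOpenMap

section RectCut

variable {ι : Type*} {P : ι → Set Plane} {s t : Set ι} {K : Set Plane} {a b c d m : ℝ}

theorem IsDissection.rect_cut_vertical (hm : m ∈ Icc a b)
    (hleft : IsDissection P s (rect a m c d ∩ K)) (hright : IsDissection P t (rect m b c d ∩ K)) :
    IsDissection P (s ∪ t) (rect a b c d ∩ K) := by
  refine IsDissection.cut (isOpenMap_coord 0) m ?_ ?_
  · convert hleft using 1
    ext p
    have := hm.2
    simp only [rect, mem_inter_iff, mem_ofPred_eq, mem_preimage, mem_Icc, mem_Iic]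
    grind
  · convert hright using 1
    ext p
    have := hm.1
    simp only [rect, mem_inter_iff, mem_ofPred_eq, mem_preimage, mem_Icc, mem_Ici]
    grind

theorem IsDissection.rect_cut_horizontal (hm : m ∈ Icc c d)
    (hlower : IsDissection P s (rect a b c m ∩ K)) (hupper : IsDissection P t (rect a b m d ∩ K)) :
    IsDissection P (s ∪ t) (rect a b c d ∩ K) := by
  refine IsDissection.cut (isOpenMap_coord 1) m ?_ ?_
  · convert hlower using 1
    ext p
    have := hm.2
    simp only [rect, mem_inter_iff, mem_ofPred_eq, mem_preimage, mem_Icc, mem_Iic]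
    grind
  · convert hupper using 1
    ext p
    have := hm.1
    simp only [rect, mem_inter_iff, mem_ofPred_eq, mem_preimage, mem_Icc, mem_Ici]
    grind

end RectCut

/-- The linear form `x + √3 y`; its level lines are the slanted cuts. -/
noncomputable def slant : Plane →L[ℝ] ℝ :=
  EuclideanSpace.proj 0 + √3 • EuclideanSpace.proj 1

theorem slant_apply (p : Plane) : slant p = p 0 + √3 * p 1 := rfl

theorem isOpenMap_slant : IsOpenMap slant :=
  slant.isOpenMap_of_ne_zero fun h => by
    simpa [slant_apply] using DFunLike.congr_fun h (EuclideanSpace.single 0 1)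

theorem rect_subset_slant_le {a b c d k : ℝ} (hk : b + √3 * d ≤ k) :
    rect a b c d ⊆ slant ⁻¹' Iic k := fun p ⟨hx, hy⟩ => by
  have := mul_le_mul_of_nonneg_left hy.2 (Real.sqrt_nonneg 3)
  simp only [mem_preimage, mem_Iic, slant_apply]
  linarith [hx.2]

theorem sqrt_three_mem_Ioo : √3 ∈ Ioo 1.7 1.8 :=
  ⟨Real.lt_sqrt_of_sq_lt (by norm_num), (Real.sqrt_lt' (by norm_num)).2 (by norm_num)⟩

/-- The six pieces of the square `[0, √3] × [0, √3]`. -/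
noncomputable def squarePiece : Fin 6 → Set Plane :=
  ![rect 0 1 0 1,
    rect 1 √3 0 1 ∩ slant ⁻¹' Iic 3,
    rect 0 (2 - √3) 1 √3 ∩ slant ⁻¹' Iic 3,
    rect (2 - √3) √3 1 √3 ∩ slant ⁻¹' Iic 3,
    rect 0 (√3 - 1) 0 √3 ∩ slant ⁻¹' Ici 3,
    rect (√3 - 1) √3 0 √3 ∩ slant ⁻¹' Ici 3]

/-- The six pieces of the three unit squares, the `i`-th being a translate of `squarePiece i`. -/
noncomputable def unitSquaresPiece : Fin 6 → Set Plane :=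
  ![rect 0 1 0 1,
    rect 2 (√3 + 1) 0 1 ∩ slant ⁻¹' Iic 4,
    rect (√3 + 1) 3 0 1 ∩ slant ⁻¹' Iic 4,
    rect 4 5 0 1 ∩ slant ⁻¹' Iic 5,
    rect 2 3 0 1 ∩ slant ⁻¹' Ici 4,
    rect 4 5 0 1 ∩ slant ⁻¹' Ici 5]

/-- The vector translating `squarePiece i` to `unitSquaresPiece i`. -/
noncomputable def pieceShift : Fin 6 → Plane :=
  ![0, !₂[1, 0], !₂[√3 + 1, -1], !₂[√3 + 2, -1], !₂[4 - √3, 1 - √3], !₂[5 - √3, 1 - √3]]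

theorem isClosed_squarePiece (i : Fin 6) : IsClosed (squarePiece i) := by
  have isClosed_cell {a b c d : ℝ} {I : Set ℝ} (hI : IsClosed I) :
      IsClosed (rect a b c d ∩ slant ⁻¹' I) :=
    (isClosed_rect a b c d).inter (hI.preimage slant.continuous)
  fin_cases i
  exacts [isClosed_rect .., isClosed_cell isClosed_Iic, isClosed_cell isClosed_Iic,
    isClosed_cell isClosed_Iic, isClosed_cell isClosed_Ici, isClosed_cell isClosed_Ici]

theorem image_addRight_rect_inter_slant (a b c d u w : ℝ) (I : Set ℝ) :
    IsometryEquiv.addRight !₂[u, w] '' (rect a b c d ∩ slant ⁻¹' I) =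
      rect (a + u) (b + u) (c + w) (d + w) ∩ slant ⁻¹' ((· + (u + √3 * w)) '' I) := by
  have hslant : slant !₂[u, w] = u + √3 * w := slant_apply _
  ext p
  simp only [IsometryEquiv.addRight_apply, image_add_right, mem_inter_iff, mem_preimage, map_add,
    map_neg, hslant, rect, mem_ofPred_eq, PiLp.add_apply, PiLp.neg_apply, Matrix.cons_val_zero,
    Matrix.cons_val_one, Matrix.cons_val_fin_one, mem_Icc, le_add_neg_iff_add_le,
    add_neg_le_iff_le_add]

section Trim

variable {a a' b b' c c' d d' k : ℝ}

theorem rect_inter_slant_le_congr_right (hb : k ≤ b + √3 * c) (hb' : k ≤ b' + √3 * c) :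
    rect a b c d ∩ slant ⁻¹' Iic k = rect a b' c d ∩ slant ⁻¹' Iic k := by
  ext p
  simp only [rect, mem_inter_iff, mem_ofPred_eq, mem_preimage, mem_Icc, mem_Iic, slant_apply]
  have hmul : c ≤ p 1 → √3 * c ≤ √3 * p 1 := fun h => by gcongr
  grind

theorem rect_inter_slant_le_congr_top (hd : k ≤ a + √3 * d) (hd' : k ≤ a + √3 * d') :
    rect a b c d ∩ slant ⁻¹' Iic k = rect a b c d' ∩ slant ⁻¹' Iic k := by
  ext p
  simp only [rect, mem_inter_iff, mem_ofPred_eq, mem_preimage, mem_Icc, mem_Iic, slant_apply]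
  have cancel (t : ℝ) : √3 * p 1 ≤ √3 * t → p 1 ≤ t := (le_of_mul_le_mul_left · (by positivity))
  grind

theorem rect_inter_slant_ge_congr_left (ha : a + √3 * d ≤ k) (ha' : a' + √3 * d ≤ k) :
    rect a b c d ∩ slant ⁻¹' Ici k = rect a' b c d ∩ slant ⁻¹' Ici k := by
  ext p
  simp only [rect, mem_inter_iff, mem_ofPred_eq, mem_preimage, mem_Icc, mem_Ici, slant_apply]
  have hmul : p 1 ≤ d → √3 * p 1 ≤ √3 * d := fun h => by gcongr
  grind

theorem rect_inter_slant_ge_congr_bottom (hc : b + √3 * c ≤ k) (hc' : b + √3 * c' ≤ k) :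
    rect a b c d ∩ slant ⁻¹' Ici k = rect a b c' d ∩ slant ⁻¹' Ici k := by
  ext p
  simp only [rect, mem_inter_iff, mem_ofPred_eq, mem_preimage, mem_Icc, mem_Ici, slant_apply]
  have cancel (t : ℝ) : √3 * t ≤ √3 * p 1 → t ≤ p 1 := (le_of_mul_le_mul_left · (by positivity))
  grind

end Trim

theorem image_addRight_squarePiece (i : Fin 6) :
    IsometryEquiv.addRight (pieceShift i) '' squarePiece i = unitSquaresPiece i := by
  have hsq : √3 * √3 = 3 := Real.mul_self_sqrt (by norm_num)
  obtain ⟨hlb, hub⟩ := sqrt_three_mem_Ioo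
  fin_cases i
  · simp [pieceShift, squarePiece, unitSquaresPiece]
  · refine (image_addRight_rect_inter_slant ..).trans ?_
    rw [image_add_const_Iic]
    change _ = rect 2 (√3 + 1) 0 1 ∩ slant ⁻¹' Iic 4
    ring_nf
  · refine (image_addRight_rect_inter_slant ..).trans ?_
    rw [image_add_const_Iic]
    calc
      _ = rect (√3 + 1) 3 0 (√3 - 1) ∩ slant ⁻¹' Iic 4 := by ring_nf
      _ = rect (√3 + 1) 3 0 1 ∩ slant ⁻¹' Iic 4 :=
        rect_inter_slant_le_congr_top (by linarith) (by linarith)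
  · refine (image_addRight_rect_inter_slant ..).trans ?_
    rw [image_add_const_Iic]
    calc
      _ = rect 4 (2 * √3 + 2) 0 (√3 - 1) ∩ slant ⁻¹' Iic 5 := by ring_nf
      _ = rect 4 5 0 (√3 - 1) ∩ slant ⁻¹' Iic 5 :=
        rect_inter_slant_le_congr_right (by linarith) (by linarith)
      _ = rect 4 5 0 1 ∩ slant ⁻¹' Iic 5 :=
        rect_inter_slant_le_congr_top (by linarith) (by linarith)
  · refine (image_addRight_rect_inter_slant ..).trans ?_
    rw [image_add_const_Ici, mul_sub, hsq]
    calc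
      _ = rect (4 - √3) 3 (1 - √3) 1 ∩ slant ⁻¹' Ici 4 := by ring_nf
      _ = rect 2 3 (1 - √3) 1 ∩ slant ⁻¹' Ici 4 :=
        rect_inter_slant_ge_congr_left (by linarith) (by linarith)
      _ = rect 2 3 0 1 ∩ slant ⁻¹' Ici 4 :=
        rect_inter_slant_ge_congr_bottom (by linarith) (by linarith)
  · refine (image_addRight_rect_inter_slant ..).trans ?_
    rw [image_add_const_Ici, mul_sub, hsq]
    calc
      _ = rect 4 5 (1 - √3) 1 ∩ slant ⁻¹' Ici 5 := by ring_nf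
      _ = rect 4 5 0 1 ∩ slant ⁻¹' Ici 5 :=
        rect_inter_slant_ge_congr_bottom (by linarith) (by linarith)

theorem isDissection_squarePiece : IsDissection squarePiece univ (rect 0 √3 0 √3) := by
  obtain ⟨hlb, hub⟩ := sqrt_three_mem_Ioo
  have piece (i : Fin 6) : IsDissection squarePiece {i} (squarePiece i) :=
    .singleton (isClosed_squarePiece i)
  have unitSquare : IsDissection squarePiece {0} (rect 0 1 0 1 ∩ slant ⁻¹' Iic 3) := by
    rw [inter_eq_left.2 (rect_subset_slant_le (by linarith))]
    exact piece 0
  have low : IsDissection squarePiece ({0} ∪ {1}) (rect 0 √3 0 1 ∩ slant ⁻¹' Iic 3) :=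
    .rect_cut_vertical ⟨by linarith, by linarith⟩ unitSquare (piece 1)
  have middle : IsDissection squarePiece ({2} ∪ {3}) (rect 0 √3 1 √3 ∩ slant ⁻¹' Iic 3) :=
    .rect_cut_vertical ⟨by linarith, by linarith⟩ (piece 2) (piece 3)
  have high : IsDissection squarePiece ({4} ∪ {5}) (rect 0 √3 0 √3 ∩ slant ⁻¹' Ici 3) :=
    .rect_cut_vertical ⟨by linarith, by linarith⟩ (piece 4) (piece 5)
  convert IsDissection.cut isOpenMap_slant 3
    (.rect_cut_horizontal ⟨by linarith, by linarith⟩ low middle) high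
  exact (eq_univ_of_forall (by decide)).symm

theorem isDissection_unitSquaresPiece :
    IsDissection unitSquaresPiece univ (rect 0 1 0 1 ∪ rect 2 3 0 1 ∪ rect 4 5 0 1) := by
  obtain ⟨hlb, hub⟩ := sqrt_three_mem_Ioo
  have piece (i : Fin 6) : IsDissection unitSquaresPiece {i} (unitSquaresPiece i) :=
    .singleton <| image_addRight_squarePiece i ▸
      (IsometryEquiv.addRight _).toHomeomorph.isClosedMap _ (isClosed_squarePiece i)
  have first : IsDissection unitSquaresPiece {0} (rect 0 1 0 1) := piece 0
  have second : IsDissection unitSquaresPiece ({1} ∪ {2} ∪ {4}) (rect 2 3 0 1) :=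
    .cut isOpenMap_slant 4
      (.rect_cut_vertical ⟨by linarith, by linarith⟩ (piece 1) (piece 2)) (piece 4)
  have third : IsDissection unitSquaresPiece ({3} ∪ {5}) (rect 4 5 0 1) :=
    .cut isOpenMap_slant 5 (piece 3) (piece 5)
  have disjoint₁₂ : Disjoint (rect 0 1 0 1) (rect 2 3 0 1) :=
    disjoint_rect_of_lt (by norm_num) ..
  have disjoint₁₂₃ : Disjoint (rect 0 1 0 1 ∪ rect 2 3 0 1) (rect 4 5 0 1) :=
    (disjoint_rect_of_lt (by norm_num) ..).union_left (disjoint_rect_of_lt (by norm_num) ..)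
  convert (first.union second (disjoint₁₂.mono interior_subset interior_subset)).union third
    (disjoint₁₂₃.mono interior_subset interior_subset)
  exact (eq_univ_of_forall (by decide)).symm

/-- **6-piece trisection of the square.**  There are six closed subsets of the plane with
pairwise disjoint interiors whose union is the square `[0,√3] × [0,√3]`, together with six
isometries of the plane, such that the images of the pieces have pairwise disjoint interiors
and their union is the union of the three pairwise disjoint unit squares
`[0,1]×[0,1]`, `[2,3]×[0,1]` and `[4,5]×[0,1]`. -/
theorem six_piece_square_trisection :
    ∃ (P : Fin 6 → Set Plane) (g : Fin 6 → (Plane ≃ᵢ Plane)),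
      (∀ i, IsClosed (P i)) ∧
      (⋃ i, P i) = rect 0 (Real.sqrt 3) 0 (Real.sqrt 3) ∧
      (∀ i j, i ≠ j → interior (P i) ∩ interior (P j) = ∅) ∧
      (∀ i j, i ≠ j → interior (g i '' P i) ∩ interior (g j '' P j) = ∅) ∧
      (⋃ i, g i '' P i) = rect 0 1 0 1 ∪ rect 2 3 0 1 ∪ rect 4 5 0 1 := by
  have source := isDissection_squarePiece
  have target := isDissection_unitSquaresPiece
  refine ⟨squarePiece, fun i => IsometryEquiv.addRight (pieceShift i),
    fun i => source.isClosed i trivial, ?_, fun _ _ hij => ?_, fun _ _ hij => ?_, ?_⟩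
  · simpa only [biUnion_univ] using source.biUnion_eq
  · exact (source.pairwiseDisjoint trivial trivial hij).inter_eq
  · simpa only [image_addRight_squarePiece] using
      (target.pairwiseDisjoint trivial trivial hij).inter_eq
  · simpa only [image_addRight_squarePiece, biUnion_univ] using target.biUnion_eq
end

section
/- There exists a 3-piece dissection of the 3×1 rectangle into a square: there are three closed subsets P₁,P₂,P₃ of ℝ² whose union is the rectangle [0,3]×[0,1], whose interiors are pairwise disjoint, together with three isometries g₁,g₂,g₃ of ℝ² such that the images g₁(P₁),g₂(P₂),g₃(P₃) have pairwise disjoint interiors and their union is the square [0,√3]×[0,√3]. -/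
/-!
The dissection is a P-slide, taking an `a × b` rectangle to a `c × d` rectangle of the same area
whenever `c ≤ a ≤ 2 * c`. Place both at the origin and draw the line from `(a, 0)` to `(0, d)`. The
part of each rectangle above this line is a right triangle; since `a * b = c * d`, the two triangles
are translates of each other along the line. Below the line, both rectangles contain the part of
`[0, c] × [0, b]` below it; what remains is in each case a right triangle (as `a ≤ 2 * c`, the
corner `(c, b)` lies on or above the line), and these two are again translates of each other along
the line.
-/

open Real Set

open scoped Function

/-- A dissection of the region `S` into the region `T`, with pieces indexed by `ι`: closed pieces
with disjoint interiors that fill `S`, and isometries of the whole space (reflections allowed) that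
move them to fill `T`, again with disjoint interiors. -/
def DissectsInto (ι : Type*) {X : Type*} [PseudoEMetricSpace X] (S T : Set X) : Prop :=
  ∃ (P : ι → Set X) (g : ι → X ≃ᵢ X),
    (∀ i, IsClosed (P i)) ∧
    ⋃ i, P i = S ∧
    Pairwise (Disjoint on fun i ↦ interior (P i)) ∧
    Pairwise (Disjoint on fun i ↦ interior (g i '' P i)) ∧
    ⋃ i, g i '' P i = T

section Cut

variable {X α : Type*} [LinearOrder α] {f : X → α} {k : α} {A B : Set X}

/-- The three pieces into which a region made of two parts `A` and `B` falls when its portion with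
`k ≤ f` is cut off in one piece, across the boundary between `A` and `B`. -/
def cut (A B : Set X) (f : X → α) (k : α) : Fin 3 → Set X :=
  ![{x ∈ A | f x ≤ k}, {x ∈ B | f x ≤ k}, {x ∈ A ∪ B | k ≤ f x}]

theorem iUnion_cut : ⋃ i, cut A B f k i = A ∪ B := by
  ext x
  have hk : f x ≤ k ∨ k ≤ f x := le_total (f x) k
  simp only [cut, mem_iUnion, Fin.exists_fin_succ, Matrix.cons_val_zero, Matrix.cons_val_succ,
    Matrix.cons_val_fin_one, exists_const, mem_ofPred_eq, mem_union]
  tauto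

variable [TopologicalSpace X] [TopologicalSpace α]

theorem disjoint_interior_of_mapsTo_Iic_Ici [OrderTopology α] [DenselyOrdered α] [NoMaxOrder α]
    (hf : IsOpenMap f) (hA : MapsTo f A (Iic k)) (hB : MapsTo f B (Ici k)) :
    Disjoint (interior A) (interior B) := by
  have hlt : MapsTo f (interior A) (Iio k) := interior_Iic (a := k) ▸ hf.mapsTo_interior hA
  exact disjoint_left.2 fun x hxA hxB ↦ (hlt hxA).not_ge (hB (interior_subset hxB))

theorem isClosed_cut [OrderClosedTopology α] (hf : Continuous f) (hA : IsClosed A)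
    (hB : IsClosed B) (i : Fin 3) : IsClosed (cut A B f k i) := by
  have hle : IsClosed {x | f x ≤ k} := isClosed_le hf continuous_const
  have hge : IsClosed {x | k ≤ f x} := isClosed_le continuous_const hf
  fin_cases i
  exacts [hA.inter hle, hB.inter hle, (hA.union hB).inter hge]

theorem pairwise_disjoint_interior_cut [OrderTopology α] [DenselyOrdered α] [NoMaxOrder α]
    (hf : IsOpenMap f) (hAB : Disjoint (interior A) (interior B)) :
    Pairwise (Disjoint on fun i ↦ interior (cut A B f k i)) := by
  have h01 : Disjoint (interior (cut A B f k 0)) (interior (cut A B f k 1)) :=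
    hAB.mono (interior_mono fun _ hx ↦ hx.1) (interior_mono fun _ hx ↦ hx.1)
  have h02 : Disjoint (interior (cut A B f k 0)) (interior (cut A B f k 2)) :=
    disjoint_interior_of_mapsTo_Iic_Ici hf (fun _ hx ↦ hx.2) fun _ hx ↦ hx.2
  have h12 : Disjoint (interior (cut A B f k 1)) (interior (cut A B f k 2)) :=
    disjoint_interior_of_mapsTo_Iic_Ici hf (fun _ hx ↦ hx.2) fun _ hx ↦ hx.2
  rw [pairwise_disjoint_on]
  simp [Fin.forall_fin_succ, h01, h02, h12]

end Cut

section Rect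

variable {x₀ x₁ x₂ x₃ y₀ y₁ y₂ y₃ : ℝ}

theorem isClosed_rect_s2 : IsClosed (rect x₀ x₁ y₀ y₁) :=
  (isClosed_Icc.preimage (by fun_prop : Continuous fun p : Plane ↦ p 0)).inter
    (isClosed_Icc.preimage (by fun_prop : Continuous fun p : Plane ↦ p 1))

theorem rect_union_rect_horizontal (h₀₁ : x₀ ≤ x₁) (h₁₂ : x₁ ≤ x₂) :
    rect x₀ x₁ y₀ y₁ ∪ rect x₁ x₂ y₀ y₁ = rect x₀ x₂ y₀ y₁ := by
  ext p
  simp only [rect, mem_union, mem_ofPred_eq, ← or_and_right, ← Icc_union_Icc_eq_Icc h₀₁ h₁₂]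

theorem rect_union_rect_vertical (h₀₁ : y₀ ≤ y₁) (h₁₂ : y₁ ≤ y₂) :
    rect x₀ x₁ y₀ y₁ ∪ rect x₀ x₁ y₁ y₂ = rect x₀ x₁ y₀ y₂ := by
  ext p
  simp only [rect, mem_union, mem_ofPred_eq, ← and_or_left, ← Icc_union_Icc_eq_Icc h₀₁ h₁₂]

theorem disjoint_interior_rect_horizontal :
    Disjoint (interior (rect x₀ x₁ y₀ y₁)) (interior (rect x₁ x₂ y₂ y₃)) :=
  disjoint_interior_of_mapsTo_Iic_Ici (PiLp.isOpenMap_apply 2 _ 0)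
    (fun _ hp ↦ hp.1.2) fun _ hp ↦ hp.1.1

theorem disjoint_interior_rect_vertical :
    Disjoint (interior (rect x₀ x₁ y₀ y₁)) (interior (rect x₂ x₃ y₁ y₂)) :=
  disjoint_interior_of_mapsTo_Iic_Ici (PiLp.isOpenMap_apply 2 _ 1)
    (fun _ hp ↦ hp.2.2) fun _ hp ↦ hp.2.1

end Rect

/-- The linear form `(x, y) ↦ m x + n y`, used to describe lines in the plane as its level sets. -/
noncomputable def linearForm (m n : ℝ) : StrongDual ℝ Plane :=
  m • EuclideanSpace.proj 0 + n • EuclideanSpace.proj 1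

theorem linearForm_apply (m n : ℝ) (p : Plane) : linearForm m n p = m * p 0 + n * p 1 := rfl

theorem linearForm_ne_zero {m : ℝ} (hm : m ≠ 0) (n : ℝ) : linearForm m n ≠ 0 := fun h ↦ by
  simpa [linearForm_apply, hm] using DFunLike.congr_fun h !₂[1, 0]

section Triangle

variable {m n k x₀ x₁ y₀ y₁ : ℝ}

/-- The right triangle that the line `f = k` cuts off from the quadrant above and to the right of
`(x, y)`. It is a triangle only if both coefficients of `f` are positive. -/
def lowerTriangle (f : StrongDual ℝ Plane) (k x y : ℝ) : Set Plane :=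
  {p | x ≤ p 0 ∧ y ≤ p 1 ∧ f p ≤ k}

/-- The right triangle that the line `f = k` cuts off from the quadrant below and to the left of
`(x, y)`. It is a triangle only if both coefficients of `f` are positive. -/
def upperTriangle (f : StrongDual ℝ Plane) (k x y : ℝ) : Set Plane :=
  {p | p 0 ≤ x ∧ p 1 ≤ y ∧ k ≤ f p}

theorem addRight_image_lowerTriangle (f : StrongDual ℝ Plane) (k x y : ℝ) (v : Plane) :
    IsometryEquiv.addRight v '' lowerTriangle f k x y =
      lowerTriangle f (k + f v) (x + v 0) (y + v 1) := by
  rw [← IsometryEquiv.preimage_symm]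
  ext p
  simp [lowerTriangle, ← sub_eq_add_neg, le_sub_iff_add_le]

theorem addRight_image_upperTriangle (f : StrongDual ℝ Plane) (k x y : ℝ) (v : Plane) :
    IsometryEquiv.addRight v '' upperTriangle f k x y =
      upperTriangle f (k + f v) (x + v 0) (y + v 1) := by
  rw [← IsometryEquiv.preimage_symm]
  ext p
  simp [upperTriangle, ← sub_eq_add_neg, le_sub_iff_add_le]

theorem sep_rect_le_eq_lowerTriangle (hm : 0 < m) (hn : 0 < n)
    (hright : k ≤ linearForm m n !₂[x₁, y₀]) (htop : k ≤ linearForm m n !₂[x₀, y₁]) :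
    {p ∈ rect x₀ x₁ y₀ y₁ | linearForm m n p ≤ k} = lowerTriangle (linearForm m n) k x₀ y₀ := by
  ext p
  refine ⟨fun ⟨⟨hx, hy⟩, hp⟩ ↦ ⟨hx.1, hy.1, hp⟩, fun ⟨hx, hy, hp⟩ ↦ ⟨⟨⟨hx, ?_⟩, hy, ?_⟩, hp⟩⟩
  all_goals simp only [linearForm_apply, Matrix.cons_val] at hright htop hp
  · refine le_of_mul_le_mul_left ?_ hm
    linarith [mul_le_mul_of_nonneg_left hy hn.le]
  · refine le_of_mul_le_mul_left ?_ hn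
    linarith [mul_le_mul_of_nonneg_left hx hm.le]

theorem sep_rect_ge_eq_upperTriangle (hm : 0 < m) (hn : 0 < n)
    (hleft : linearForm m n !₂[x₀, y₁] ≤ k) (hbottom : linearForm m n !₂[x₁, y₀] ≤ k) :
    {p ∈ rect x₀ x₁ y₀ y₁ | k ≤ linearForm m n p} = upperTriangle (linearForm m n) k x₁ y₁ := by
  ext p
  refine ⟨fun ⟨⟨hx, hy⟩, hp⟩ ↦ ⟨hx.2, hy.2, hp⟩, fun ⟨hx, hy, hp⟩ ↦ ⟨⟨⟨?_, hx⟩, ?_, hy⟩, hp⟩⟩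
  all_goals simp only [linearForm_apply, Matrix.cons_val] at hleft hbottom hp
  · refine le_of_mul_le_mul_left ?_ hm
    linarith [mul_le_mul_of_nonneg_left hy hn.le]
  · refine le_of_mul_le_mul_left ?_ hn
    linarith [mul_le_mul_of_nonneg_left hx hm.le]

end Triangle

section PSlide

variable {a b c d : ℝ}

/-- The translations of the P-slide from `[0, a] × [0, b]` to `[0, c] × [0, d]`. The last two are
parallel to the line from `(a, 0)` to `(0, d)` because `a * b = c * d`. -/
noncomputable def slideVector (a b c d : ℝ) : Fin 3 → Plane :=
  ![0, !₂[-c, b], !₂[c - a, d - b]]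

theorem linearForm_slideVector (harea : a * b = c * d) (i : Fin 3) :
    linearForm d a (slideVector a b c d i) = 0 := by
  fin_cases i
  · exact map_zero _
  · suffices d * -c + a * b = 0 by simpa [slideVector, linearForm_apply] using this
    linarith
  · suffices d * (c - a) + a * (d - b) = 0 by simpa [slideVector, linearForm_apply] using this
    linarith

theorem addRight_image_sep_rect_le (ha : 0 < a) (hd : 0 < d) (harea : a * b = c * d)
    (hcb : a * d ≤ linearForm d a !₂[c, b]) :
    IsometryEquiv.addRight (slideVector a b c d 1) ''
        {p ∈ rect c a 0 b | linearForm d a p ≤ a * d} =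
      {p ∈ rect 0 c b d | linearForm d a p ≤ a * d} := by
  have ha0 : a * d ≤ linearForm d a !₂[a, 0] := by simp [linearForm_apply, mul_comm]
  have h0d : a * d ≤ linearForm d a !₂[0, d] := by simp [linearForm_apply]
  rw [sep_rect_le_eq_lowerTriangle hd ha ha0 hcb, sep_rect_le_eq_lowerTriangle hd ha hcb h0d,
    addRight_image_lowerTriangle, linearForm_slideVector harea]
  simp [slideVector]

theorem addRight_image_sep_rect_ge (ha : 0 < a) (hd : 0 < d) (hca : c ≤ a)
    (harea : a * b = c * d) :
    IsometryEquiv.addRight (slideVector a b c d 2) ''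
        {p ∈ rect 0 a 0 b | a * d ≤ linearForm d a p} =
      {p ∈ rect 0 c 0 d | a * d ≤ linearForm d a p} := by
  have ha0 : linearForm d a !₂[a, 0] ≤ a * d := by simp [linearForm_apply, mul_comm]
  have h0d : linearForm d a !₂[0, d] ≤ a * d := by simp [linearForm_apply]
  have hcd : c * d ≤ a * d := mul_le_mul_of_nonneg_right hca hd.le
  have hc0 : linearForm d a !₂[c, 0] ≤ a * d := by simpa [linearForm_apply, mul_comm d] using hcd
  have h0b : linearForm d a !₂[0, b] ≤ a * d := by simpa [linearForm_apply, harea] using hcd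
  rw [sep_rect_ge_eq_upperTriangle hd ha h0b ha0, sep_rect_ge_eq_upperTriangle hd ha h0d hc0,
    addRight_image_upperTriangle, linearForm_slideVector harea]
  simp [slideVector]

theorem addRight_image_cut_rect (ha : 0 < a) (hb : 0 ≤ b) (hc : 0 ≤ c) (hd : 0 < d) (hca : c ≤ a)
    (hbd : b ≤ d) (harea : a * b = c * d) (hcb : a * d ≤ linearForm d a !₂[c, b]) (i : Fin 3) :
    IsometryEquiv.addRight (slideVector a b c d i) ''
        cut (rect 0 c 0 b) (rect c a 0 b) (linearForm d a) (a * d) i =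
      cut (rect 0 c 0 b) (rect 0 c b d) (linearForm d a) (a * d) i := by
  fin_cases i
  · simp [slideVector, cut]
  · exact addRight_image_sep_rect_le ha hd harea hcb
  · have hge := addRight_image_sep_rect_ge ha hd hca harea
    rwa [← rect_union_rect_horizontal hc hca, ← rect_union_rect_vertical hb hbd] at hge

theorem three_piece_rectangle_to_square_general (hb : 0 < b) (hc : 0 < c) (hca : c ≤ a)
    (hac : a ≤ 2 * c) (harea : a * b = c * d) :
    DissectsInto (Fin 3) (rect 0 a 0 b) (rect 0 c 0 d) := by
  have ha : 0 < a := hc.trans_le hca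
  have hd : 0 < d := pos_of_mul_pos_right (harea ▸ mul_pos ha hb) hc.le
  have hbd : b ≤ d := le_of_mul_le_mul_left (harea ▸ mul_le_mul_of_nonneg_right hca hb.le) hc
  have hcb : a * d ≤ linearForm d a !₂[c, b] := by
    simp only [linearForm_apply, Matrix.cons_val]
    linarith [mul_le_mul_of_nonneg_right hac hd.le]
  have hopen : IsOpenMap (linearForm d a) :=
    (linearForm d a).isOpenMap_of_ne_zero (linearForm_ne_zero hd.ne' a)
  refine ⟨cut (rect 0 c 0 b) (rect c a 0 b) (linearForm d a) (a * d),
    fun i ↦ IsometryEquiv.addRight (slideVector a b c d i),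
    isClosed_cut (linearForm d a).continuous isClosed_rect_s2 isClosed_rect_s2, ?_,
    pairwise_disjoint_interior_cut hopen disjoint_interior_rect_horizontal, ?_, ?_⟩
  · rw [iUnion_cut, rect_union_rect_horizontal hc.le hca]
  all_goals simp only [addRight_image_cut_rect ha hb.le hc.le hd hca hbd harea hcb]
  · exact pairwise_disjoint_interior_cut hopen disjoint_interior_rect_vertical
  · rw [iUnion_cut, rect_union_rect_vertical hb.le hbd]

end PSlide

/-- **3-piece dissection of the `3 × 1` rectangle into a square.**  There are three closed
subsets of the plane with pairwise disjoint interiors whose union is the rectangle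
`[0,3] × [0,1]`, together with three isometries of the plane such that the images of the
pieces have pairwise disjoint interiors and their union is the square `[0,√3] × [0,√3]`. -/
theorem three_piece_rectangle_to_square :
    ∃ (P : Fin 3 → Set Plane) (g : Fin 3 → (Plane ≃ᵢ Plane)),
      (∀ i, IsClosed (P i)) ∧
      (⋃ i, P i) = rect 0 3 0 1 ∧
      (∀ i j, i ≠ j → interior (P i) ∩ interior (P j) = ∅) ∧
      (∀ i j, i ≠ j → interior (g i '' P i) ∩ interior (g j '' P j) = ∅) ∧
      (⋃ i, g i '' P i) = rect 0 (Real.sqrt 3) 0 (Real.sqrt 3) := by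
  have hsq : √3 * √3 = (3 : ℝ) := mul_self_sqrt (by norm_num)
  have hpos : 0 < √(3 : ℝ) := sqrt_pos.2 (by norm_num)
  have h : DissectsInto (Fin 3) (rect 0 3 0 1) (rect 0 √3 0 √3) :=
    three_piece_rectangle_to_square_general one_pos hpos (by nlinarith) (by nlinarith) (by linarith)
  simpa only [DissectsInto, Pairwise, Function.onFun, disjoint_iff_inter_eq_empty] using h
end

section
/- There exists a 4-piece dissection of the unit square into two equal smaller squares: there are four closed subsets P₁,…,P₄ of ℝ² whose union is the square [0,1]×[0,1], whose interiors are pairwise disjoint (the four triangles cut off by the two diagonals), together with four isometries g₁,…,g₄ of ℝ² such that the images gᵢ(Pᵢ) have pairwise disjoint interiors and their union is the union of the two disjoint squares [0,√2/2]×[0,√2/2] and [1,1+√2/2]×[0,√2/2]. -/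
open Real Set

/-!
Rotating the unit square by `π / 4` turns its diagonals into coordinate lines, so after moving its
centre to the origin the four triangles become the parts of the diamond `|x| + |y| ≤ √2 / 2` in the
four closed quadrants. Each of them is half of a square of side `√2 / 2` whose sides are parallel to
the axes, and the triangles in opposite quadrants are the two halves of the same square up to
translation.
-/

open Topology Pointwise Function

/-- The family `P` cuts `S` into closed pieces which overlap only along their boundaries. Nothing is
required of the index type, so that an `n`-piece dissection is one indexed by `Fin n`. -/
structure IsDissection_s3 {ι X : Type*} [TopologicalSpace X] (P : ι → Set X) (S : Set X) : Prop where
  isClosed : ∀ i, IsClosed (P i)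
  pairwise_disjoint : Pairwise (Disjoint on fun i => interior (P i))
  iUnion_eq : ⋃ i, P i = S

namespace IsDissection_s3

variable {ι κ X Y : Type*} [TopologicalSpace X] [TopologicalSpace Y] {P : ι → Set X} {S T : Set X}

lemma interior_inter_eq_empty (hP : IsDissection_s3 P S) (i j : ι) (hij : i ≠ j) :
    interior (P i) ∩ interior (P j) = ∅ :=
  (hP.pairwise_disjoint hij).inter_eq

lemma comp_equiv (hP : IsDissection_s3 P S) (e : κ ≃ ι) : IsDissection_s3 (P ∘ e) S where
  isClosed k := hP.isClosed (e k)
  pairwise_disjoint := hP.pairwise_disjoint.comp_of_injective e.injective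
  iUnion_eq := (e.surjective.iUnion_comp P).trans hP.iUnion_eq

lemma preimage (hP : IsDissection_s3 P S) (e : Y ≃ₜ X) :
    IsDissection_s3 (fun i => e ⁻¹' P i) (e ⁻¹' S) where
  isClosed i := (hP.isClosed i).preimage e.continuous
  pairwise_disjoint i j hij := by
    simpa only [onFun, ← e.preimage_interior] using (hP.pairwise_disjoint hij).preimage e
  iUnion_eq := by rw [← preimage_iUnion, hP.iUnion_eq]

lemma pair (hS : IsClosed S) (hT : IsClosed T) (hST : Disjoint (interior S) (interior T)) :
    IsDissection_s3 ![S, T] (S ∪ T) where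
  isClosed := by simp [Fin.forall_fin_two, hS, hT]
  pairwise_disjoint := by
    simp [Pairwise, Fin.forall_fin_two, onFun, hST, hST.symm]
  iUnion_eq := by
    ext p
    simp [Fin.exists_fin_two]

lemma append {m n : ℕ} {P : Fin m → Set X} {Q : Fin n → Set X} (hP : IsDissection_s3 P S)
    (hQ : IsDissection_s3 Q T) (hST : Disjoint (interior S) (interior T)) :
    IsDissection_s3 (Fin.append P Q) (S ∪ T) where
  isClosed i := by
    cases i using Fin.addCases <;> simp [hP.isClosed, hQ.isClosed]
  pairwise_disjoint i j hij := by
    have hcross (i : Fin m) (j : Fin n) : Disjoint (interior (P i)) (interior (Q j)) :=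
      hST.mono (interior_mono (hP.iUnion_eq ▸ subset_iUnion P i))
        (interior_mono (hQ.iUnion_eq ▸ subset_iUnion Q j))
    cases i using Fin.addCases with
    | left i =>
      cases j using Fin.addCases with
      | left j => simpa [onFun] using hP.pairwise_disjoint (by rintro rfl; exact hij rfl)
      | right j => simpa [onFun] using hcross i j
    | right i =>
      cases j using Fin.addCases with
      | left j => simpa [onFun] using (hcross j i).symm
      | right j => simpa [onFun] using hQ.pairwise_disjoint (by rintro rfl; exact hij rfl)
  iUnion_eq := by
    rw [← hP.iUnion_eq, ← hQ.iUnion_eq]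
    ext p
    simp [← finSumFinEquiv.exists_congr_right]

end IsDissection_s3

lemma image_trans_constVAdd_preimage {G X Y : Type*} [PseudoEMetricSpace X] [PseudoEMetricSpace Y]
    [AddGroup G] [AddAction G X] [IsIsometricVAdd G X] (ρ : Y ≃ᵢ X) (v : G) (S : Set X) :
    ρ.trans (.constVAdd v) '' (ρ ⁻¹' S) = v +ᵥ S := by
  calc ρ.trans (.constVAdd v) '' (ρ ⁻¹' S)
    _ = v +ᵥ ρ '' (ρ ⁻¹' S) := image_comp (v +ᵥ ·) ρ _
    _ = v +ᵥ S := by rw [image_preimage_eq _ ρ.surjective]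

lemma disjoint_interior_of_isOpenMap {X Y : Type*} [TopologicalSpace X] [TopologicalSpace Y]
    [PartialOrder Y] {f : X → Y} (hf : IsOpenMap f) {S T : Set X} {c : Y} [(𝓝[≠] c).NeBot]
    (hS : ∀ p ∈ S, f p ≤ c) (hT : ∀ p ∈ T, c ≤ f p) : Disjoint (interior S) (interior T) := by
  have hopen : IsOpen (f '' (interior S ∩ interior T)) :=
    hf _ (isOpen_interior.inter isOpen_interior)
  have hsub : f '' (interior S ∩ interior T) ⊆ {c} := by
    rintro _ ⟨p, ⟨hpS, hpT⟩, rfl⟩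
    exact le_antisymm (hS p (interior_subset hpS)) (hT p (interior_subset hpT))
  have hempty := interior_maximal hsub hopen
  rwa [interior_singleton, subset_empty_iff, image_eq_empty, ← disjoint_iff_inter_eq_empty]
    at hempty

lemma isOpenMap_inner_right {𝕜 E : Type*} [RCLike 𝕜] [NormedAddCommGroup E] [InnerProductSpace 𝕜 E]
    {a : E} (ha : a ≠ 0) : IsOpenMap (inner 𝕜 a) := by
  have hf : innerSL 𝕜 a ≠ 0 := by rwa [← norm_ne_zero_iff, innerSL_apply_norm, norm_ne_zero_iff]
  exact (innerSL 𝕜 a).isOpenMap_of_ne_zero hf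

lemma disjoint_interior_of_separating_line {S T : Set Plane} (α β γ : ℝ) (h : α ≠ 0 ∨ β ≠ 0)
    (hS : ∀ p ∈ S, α * p 0 + β * p 1 ≤ γ) (hT : ∀ p ∈ T, γ ≤ α * p 0 + β * p 1) :
    Disjoint (interior S) (interior T) := by
  have hnormal : (!₂[α, β] : Plane) ≠ 0 := by
    intro h₀
    have hα : α = 0 := congrArg (· 0) h₀
    have hβ : β = 0 := congrArg (· 1) h₀
    exact h.elim (· hα) (· hβ)
  have hinner (p : Plane) : inner ℝ !₂[α, β] p = α * p 0 + β * p 1 := by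
    simp [PiLp.inner_apply, mul_comm]
  simp only [← hinner] at hS hT
  exact disjoint_interior_of_isOpenMap (isOpenMap_inner_right hnormal) hS hT

/-- The right isosceles triangle with right angle at the origin and legs of length `r` along the
half-axes whose directions are given by the signs `σ, τ = ±1`. -/
def quadrantTriangle (σ τ r : ℝ) : Set Plane :=
  {p | 0 ≤ σ * p 0 ∧ 0 ≤ τ * p 1 ∧ σ * p 0 + τ * p 1 ≤ r}

lemma isClosed_quadrantTriangle (σ τ r : ℝ) : IsClosed (quadrantTriangle σ τ r) := by
  refine IsClosed.and ?_ (IsClosed.and ?_ ?_) <;> apply isClosed_le <;> fun_prop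

lemma mem_vadd_quadrantTriangle {σ τ r a b : ℝ} {p : Plane} :
    p ∈ (!₂[a, b] : Plane) +ᵥ quadrantTriangle σ τ r ↔
      0 ≤ σ * (p 0 - a) ∧ 0 ≤ τ * (p 1 - b) ∧ σ * (p 0 - a) + τ * (p 1 - b) ≤ r := by
  simp [mem_vadd_set_iff_neg_vadd_mem, quadrantTriangle, neg_add_eq_sub]

/-- The square with centre at the origin and vertices on the axes at distance `r` from it, written
as a ball of the taxicab metric. -/
def diamond (r : ℝ) : Set Plane := {p | |p 0| + |p 1| ≤ r}

lemma isDissection_diamond (r : ℝ) :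
    IsDissection_s3 (Fin.append ![quadrantTriangle 1 1 r, quadrantTriangle 1 (-1) r]
      ![quadrantTriangle (-1) 1 r, quadrantTriangle (-1) (-1) r]) (diamond r) := by
  have hunion : diamond r = (quadrantTriangle 1 1 r ∪ quadrantTriangle 1 (-1) r) ∪
      (quadrantTriangle (-1) 1 r ∪ quadrantTriangle (-1) (-1) r) := by
    ext p
    simp only [diamond, quadrantTriangle, mem_union, mem_ofPred_eq]
    rcases abs_cases (p 0) <;> rcases abs_cases (p 1) <;> grind
  rw [hunion]
  refine .append (.pair (isClosed_quadrantTriangle ..) (isClosed_quadrantTriangle ..) ?_)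
    (.pair (isClosed_quadrantTriangle ..) (isClosed_quadrantTriangle ..) ?_) ?_
  · apply disjoint_interior_of_separating_line 0 (-1) 0 (by norm_num) <;>
      rintro p ⟨-, hy, -⟩ <;> linarith
  · apply disjoint_interior_of_separating_line 0 (-1) 0 (by norm_num) <;>
      rintro p ⟨-, hy, -⟩ <;> linarith
  · apply disjoint_interior_of_separating_line (-1) 0 0 (by norm_num) <;>
      rintro p (⟨hx, -⟩ | ⟨hx, -⟩) <;> linarith

lemma isDissection_square_antidiagonal (a b r : ℝ) :
    IsDissection_s3 ![(!₂[a, b] : Plane) +ᵥ quadrantTriangle 1 1 r,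
      (!₂[a + r, b + r] : Plane) +ᵥ quadrantTriangle (-1) (-1) r] (rect a (a + r) b (b + r)) := by
  have hunion : rect a (a + r) b (b + r) = ((!₂[a, b] : Plane) +ᵥ quadrantTriangle 1 1 r) ∪
      ((!₂[a + r, b + r] : Plane) +ᵥ quadrantTriangle (-1) (-1) r) := by
    ext p
    simp only [rect, mem_union, mem_vadd_quadrantTriangle, mem_ofPred_eq, mem_Icc]
    grind
  rw [hunion]
  refine .pair ((isClosed_quadrantTriangle ..).vadd _) ((isClosed_quadrantTriangle ..).vadd _) ?_
  apply disjoint_interior_of_separating_line 1 1 (a + b + r) (by norm_num) <;>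
    intro p hp <;> linarith [(mem_vadd_quadrantTriangle.1 hp).2.2]

lemma isDissection_square_diagonal (a b r : ℝ) :
    IsDissection_s3 ![(!₂[a + r, b] : Plane) +ᵥ quadrantTriangle (-1) 1 r,
      (!₂[a, b + r] : Plane) +ᵥ quadrantTriangle 1 (-1) r] (rect a (a + r) b (b + r)) := by
  have hunion : rect a (a + r) b (b + r) = ((!₂[a + r, b] : Plane) +ᵥ quadrantTriangle (-1) 1 r) ∪
      ((!₂[a, b + r] : Plane) +ᵥ quadrantTriangle 1 (-1) r) := by
    ext p
    simp only [rect, mem_union, mem_vadd_quadrantTriangle, mem_ofPred_eq, mem_Icc]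
    grind
  rw [hunion]
  refine .pair ((isClosed_quadrantTriangle ..).vadd _) ((isClosed_quadrantTriangle ..).vadd _) ?_
  apply disjoint_interior_of_separating_line (-1) 1 (b - a) (by norm_num) <;>
    intro p hp <;> linarith [(mem_vadd_quadrantTriangle.1 hp).2.2]

/-- The parts of `diamond r` in the four quadrants, listed so that the first two and the last two
lie in opposite quadrants. -/
def diamondPiece (r : ℝ) : Fin 4 → Set Plane :=
  ![quadrantTriangle 1 1 r, quadrantTriangle (-1) (-1) r,
    quadrantTriangle (-1) 1 r, quadrantTriangle 1 (-1) r]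

/-- The positions of the right angles of the four pieces in the two squares of side `r`. -/
noncomputable def squareCorner (r : ℝ) : Fin 4 → Plane :=
  ![!₂[0, 0], !₂[r, r], !₂[1 + r, 0], !₂[1, r]]

lemma isDissection_diamondPiece (r : ℝ) : IsDissection_s3 (diamondPiece r) (diamond r) := by
  convert (isDissection_diamond r).comp_equiv (Equiv.swap 1 3) using 1
  funext i
  fin_cases i <;> rfl

lemma isDissection_vadd_diamondPiece {r : ℝ} (hr : r ≤ 1) :
    IsDissection_s3 (fun i => squareCorner r i +ᵥ diamondPiece r i)
      (rect 0 r 0 r ∪ rect 1 (1 + r) 0 r) := by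
  have hdisj : Disjoint (interior (rect 0 r 0 r)) (interior (rect 1 (1 + r) 0 r)) := by
    apply disjoint_interior_of_separating_line 1 0 1 (by norm_num) <;>
      rintro p ⟨⟨hleft, hright⟩, -⟩ <;> linarith
  have hfirst := isDissection_square_antidiagonal 0 0 r
  have hsecond := isDissection_square_diagonal 1 0 r
  simp only [zero_add] at hfirst hsecond
  convert hfirst.append hsecond hdisj using 1
  funext i
  fin_cases i <;> rfl

/-- The rotation of the plane about the origin by the angle `θ`, transported from `ℂ` along its
standard orthonormal basis. -/
noncomputable def planeRotation (θ : ℝ) : Plane ≃ₗᵢ[ℝ] Plane :=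
  (Complex.orthonormalBasisOneI.repr.symm.trans (rotation (Circle.exp θ))).trans
    Complex.orthonormalBasisOneI.repr

lemma planeRotation_apply (θ : ℝ) (p : Plane) :
    planeRotation θ p = !₂[cos θ * p 0 - sin θ * p 1, cos θ * p 1 + sin θ * p 0] := by
  ext i
  fin_cases i <;>
    simp [planeRotation, Complex.orthonormalBasisOneI_repr_symm_apply,
      Complex.exp_ofReal_mul_I_re, Complex.exp_ofReal_mul_I_im]

/-- The rotation by `π / 4` followed by the translation which brings the centre of the unit square
to the origin. -/
noncomputable def squareToDiamond : Plane ≃ᵢ Plane :=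
  (planeRotation (π / 4)).toIsometryEquiv.trans (.constVAdd !₂[0, -(√2 / 2)])

lemma squareToDiamond_apply (p : Plane) :
    squareToDiamond p = !₂[√2 / 2 * (p 0 - p 1), √2 / 2 * (p 0 + p 1 - 1)] := by
  have hcomp : squareToDiamond p = !₂[0, -(√2 / 2)] + planeRotation (π / 4) p := rfl
  rw [hcomp, planeRotation_apply, cos_pi_div_four, sin_pi_div_four]
  ext i
  fin_cases i <;> simp only [PiLp.add_apply] <;> dsimp <;> ring

lemma squareToDiamond_preimage_diamond :
    squareToDiamond ⁻¹' diamond (√2 / 2) = rect 0 1 0 1 := by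
  ext p
  have hpos : 0 < √2 / 2 := by positivity
  calc squareToDiamond p ∈ diamond (√2 / 2)
    _ ↔ √2 / 2 * (|p 0 - p 1| + |p 0 + p 1 - 1|) ≤ √2 / 2 := by
      simp [diamond, squareToDiamond_apply, abs_mul, abs_of_pos, mul_add]
    _ ↔ |p 0 - p 1| + |p 0 + p 1 - 1| ≤ 1 := by
      rw [mul_le_iff_le_one_right hpos]
    _ ↔ p ∈ rect 0 1 0 1 := by
      simp only [rect, mem_ofPred_eq, mem_Icc]
      grind

/-- **4-piece dissection of the unit square into two equal smaller squares.**  There are four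
closed subsets of the plane with pairwise disjoint interiors whose union is the unit square
`[0,1] × [0,1]` (the four triangles cut off by the two diagonals), together with four
isometries of the plane such that the images of the pieces have pairwise disjoint interiors
and their union is the union of the two disjoint squares `[0,√2/2] × [0,√2/2]` and
`[1, 1+√2/2] × [0,√2/2]`. -/
theorem four_piece_square_bisection :
    ∃ (P : Fin 4 → Set Plane) (g : Fin 4 → (Plane ≃ᵢ Plane)),
      (∀ i, IsClosed (P i)) ∧
      (⋃ i, P i) = rect 0 1 0 1 ∧
      (∀ i j, i ≠ j → interior (P i) ∩ interior (P j) = ∅) ∧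
      (∀ i j, i ≠ j → interior (g i '' P i) ∩ interior (g j '' P j) = ∅) ∧
      (⋃ i, g i '' P i) =
        rect 0 (Real.sqrt 2 / 2) 0 (Real.sqrt 2 / 2) ∪
          rect 1 (1 + Real.sqrt 2 / 2) 0 (Real.sqrt 2 / 2) := by
  have hr : √2 / 2 ≤ 1 := by
    rw [← cos_pi_div_four]
    exact cos_le_one _
  have hpieces : IsDissection_s3 (fun i => squareToDiamond ⁻¹' diamondPiece (√2 / 2) i)
      (rect 0 1 0 1) :=
    squareToDiamond_preimage_diamond ▸
      (isDissection_diamondPiece _).preimage squareToDiamond.toHomeomorph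
  have himages := isDissection_vadd_diamondPiece hr
  refine ⟨fun i => squareToDiamond ⁻¹' diamondPiece (√2 / 2) i,
    fun i => squareToDiamond.trans (.constVAdd (squareCorner (√2 / 2) i)),
    hpieces.isClosed, hpieces.iUnion_eq, hpieces.interior_inter_eq_empty, ?_, ?_⟩ <;>
    simp only [image_trans_constVAdd_preimage]
  · exact himages.interior_inter_eq_empty
  · exact himages.iUnion_eq
end
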